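/- arXiv:1108.5930 — 2 statements merged into one kernel-verified Lean document; each statement's English description precedes it below -/
import Mathlib

section
/- Let L be a linear pencil in n variables with S_L nonempty. Then S_L is bounded (as a subset of ℝⁿ) if and only if the quadratic module M_L is archimedean. -/
/-!
Elements of `M_L` are nonnegative on `S_L`, so `N - X i ^ 2 ∈ M_L` for all `i` confines `S_L` to a
box. Conversely, if `S_L` is nonempty and bounded, its only recession direction is `0`: if
`∑ i, d i • A i.succ` is positive semidefinite, then `d = 0`. By duality every vector in `ℝⁿ` is of
the form `(tr (P * A i.succ))ᵢ` with `P` positive semidefinite. Writing `P` as a sum of `v * vᵀ`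
shows that `tr (P * L) = ∑ vᵀ L v` lies in `M_L`. Hence for every linear form `ℓ` some `a + ℓ` with
`a` constant lies in `M_L`; taking `ℓ = ± X i` makes every variable bounded modulo `M_L`. The
elements bounded modulo a quadratic module form a subalgebra, so all polynomials are bounded.
-/

open MvPolynomial Matrix

/-- The linear pencil `L = A 0 + X 1 * A 1 + ... + X n * A n` as a symmetric matrix
with entries in the polynomial ring `ℝ[X 1, ..., X n]`. -/
noncomputable def pencilPoly {n m : ℕ} (A : Fin (n+1) → Matrix (Fin m) (Fin m) ℝ) :
    Matrix (Fin m) (Fin m) (MvPolynomial (Fin n) ℝ) :=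
  fun a b => MvPolynomial.C (A 0 a b) + ∑ i : Fin n, MvPolynomial.X i * MvPolynomial.C (A i.succ a b)

/-- Evaluation of the pencil at a point `x ∈ ℝⁿ`. -/
def pencilEval {n m : ℕ} (A : Fin (n+1) → Matrix (Fin m) (Fin m) ℝ) (x : Fin n → ℝ) :
    Matrix (Fin m) (Fin m) ℝ :=
  A 0 + ∑ i : Fin n, x i • A i.succ

/-- The spectrahedron `S_L = {x ∈ ℝⁿ ∣ L(x) ⪰ 0}`. -/
def specSet {n m : ℕ} (A : Fin (n+1) → Matrix (Fin m) (Fin m) ℝ) : Set (Fin n → ℝ) :=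
  {x | (pencilEval A x).PosSemidef}

/-- `vᵀ L v` for a vector `v` of polynomials. -/
noncomputable def vLv {n m : ℕ} (A : Fin (n+1) → Matrix (Fin m) (Fin m) ℝ)
    (v : Fin m → MvPolynomial (Fin n) ℝ) : MvPolynomial (Fin n) ℝ :=
  ∑ a : Fin m, ∑ b : Fin m, v a * pencilPoly A a b * v b

/-- Membership in the quadratic module `M_L` associated to the pencil `L`:
`p = s + Σⱼ vⱼᵀ L vⱼ` with `s` a sum of squares. -/
def memQM {n m : ℕ} (A : Fin (n+1) → Matrix (Fin m) (Fin m) ℝ)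
    (p : MvPolynomial (Fin n) ℝ) : Prop :=
  ∃ (k r : ℕ) (q : Fin k → MvPolynomial (Fin n) ℝ)
    (v : Fin r → Fin m → MvPolynomial (Fin n) ℝ),
    p = ∑ i, (q i)^2 + ∑ j, vLv A (v j)

/-- The quadratic module `M_L` is archimedean: for every polynomial `f` there is `N ∈ ℕ`
with `N - f² ∈ M_L`. -/
def archimedeanQM {n m : ℕ} (A : Fin (n+1) → Matrix (Fin m) (Fin m) ℝ) : Prop :=
  ∀ f : MvPolynomial (Fin n) ℝ, ∃ N : ℕ, memQM A ((N : MvPolynomial (Fin n) ℝ) - f^2)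

/-- A quadratic module of a commutative ring: an additive submonoid containing `1` and closed under
multiplication by squares. Properness (`-1 ∉ M`) is not part of the notion. -/
structure IsQuadraticModule {R : Type*} [CommRing R] (M : AddSubmonoid R) : Prop where
  one_mem : 1 ∈ M
  sq_mul_mem (a : R) {b : R} : b ∈ M → a ^ 2 * b ∈ M

namespace IsQuadraticModule

variable {R : Type*} [CommRing R] {M : AddSubmonoid R} {f g : R}

theorem sq_mem (hM : IsQuadraticModule M) (a : R) : a ^ 2 ∈ M := by
  simpa using hM.sq_mul_mem a hM.one_mem

theorem two_mul_add_sub_add_sq_mem (hM : IsQuadraticModule M) {a b : R}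
    (hf : a - f ^ 2 ∈ M) (hg : b - g ^ 2 ∈ M) : 2 * (a + b) - (f + g) ^ 2 ∈ M := by
  convert add_mem (nsmul_mem (add_mem hf hg) 2) (hM.sq_mem (f - g)) using 1
  simp only [nsmul_eq_mul, Nat.cast_ofNat]
  ring

theorem natCast_mul_sub_mul_sq_mem (hM : IsQuadraticModule M) {a : R} {n : ℕ}
    (hf : a - f ^ 2 ∈ M) (hg : n - g ^ 2 ∈ M) : n * a - (f * g) ^ 2 ∈ M := by
  convert add_mem (nsmul_mem hf n) (hM.sq_mul_mem f hg) using 1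
  simp only [nsmul_eq_mul]
  ring

variable [Algebra ℝ R]

theorem algebraMap_mem (hM : IsQuadraticModule M) {c : ℝ} (hc : 0 ≤ c) : algebraMap ℝ R c ∈ M := by
  rw [← Real.sq_sqrt hc, map_pow]
  exact hM.sq_mem _

theorem algebraMap_add_mem_of_le (hM : IsQuadraticModule M) {a b : ℝ} (hab : a ≤ b)
    (hf : algebraMap ℝ R a + f ∈ M) : algebraMap ℝ R b + f ∈ M := by
  convert add_mem (hM.algebraMap_mem (sub_nonneg.2 hab)) hf using 1
  rw [map_sub]
  ring

/-- The subalgebra of elements bounded modulo the quadratic module `M`, i.e. of those `f` with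
`N - f ^ 2 ∈ M` for some `N : ℕ`. The quadratic module `M` is archimedean when it is everything. -/
def boundedSubalgebra (hM : IsQuadraticModule M) : Subalgebra ℝ R where
  carrier := {f | ∃ N : ℕ, N - f ^ 2 ∈ M}
  add_mem' := by
    rintro f g ⟨a, ha⟩ ⟨b, hb⟩
    exact ⟨2 * (a + b), by simpa using hM.two_mul_add_sub_add_sq_mem ha hb⟩
  mul_mem' := by
    rintro f g ⟨a, ha⟩ ⟨b, hb⟩
    exact ⟨b * a, by simpa using hM.natCast_mul_sub_mul_sq_mem ha hb⟩
  algebraMap_mem' c := by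
    have hc : 0 ≤ (⌈c ^ 2⌉₊ : ℝ) - c ^ 2 := sub_nonneg.2 (Nat.le_ceil _)
    exact ⟨⌈c ^ 2⌉₊, by simpa using hM.algebraMap_mem hc⟩

theorem mem_boundedSubalgebra (hM : IsQuadraticModule M) :
    f ∈ hM.boundedSubalgebra ↔ ∃ N : ℕ, N - f ^ 2 ∈ M :=
  Iff.rfl

theorem sq_sub_sq_mem (hM : IsQuadraticModule M) {c : ℝ} (hc : 0 < c)
    (hadd : algebraMap ℝ R c + f ∈ M) (hsub : algebraMap ℝ R c - f ∈ M) :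
    algebraMap ℝ R c ^ 2 - f ^ 2 ∈ M := by
  set a := algebraMap ℝ R c
  set r := algebraMap ℝ R √(2 * c)⁻¹
  have hr : r ^ 2 * (2 * a) = 1 := by
    rw [← map_pow, Real.sq_sqrt (by positivity), ← map_ofNat (algebraMap ℝ R) 2, ← map_mul,
      ← map_mul, inv_mul_cancel₀ (by positivity), map_one]
  convert hM.sq_mul_mem r (add_mem (hM.sq_mul_mem (a - f) hadd) (hM.sq_mul_mem (a + f) hsub))
    using 1
  linear_combination (f ^ 2 - a ^ 2) * hr

theorem mem_boundedSubalgebra_of_add_mem_of_sub_mem (hM : IsQuadraticModule M) {a b : ℝ}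
    (hadd : algebraMap ℝ R a + f ∈ M) (hsub : algebraMap ℝ R b - f ∈ M) :
    f ∈ hM.boundedSubalgebra := by
  obtain ⟨N, hN⟩ := exists_nat_gt (max (max a b) 0)
  obtain ⟨⟨haN, hbN⟩, hN0⟩ : (a < N ∧ b < N) ∧ (0 : ℝ) < N := by simpa only [max_lt_iff] using hN
  rw [sub_eq_add_neg] at hsub
  have hsq := hM.sq_sub_sq_mem hN0 (hM.algebraMap_add_mem_of_le haN.le hadd)
    (by simpa only [sub_eq_add_neg] using hM.algebraMap_add_mem_of_le hbN.le hsub)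
  exact hM.mem_boundedSubalgebra.2 ⟨N ^ 2, by simpa using hsq⟩

end IsQuadraticModule

section ConvexGeometry

variable {E : Type*} [NormedAddCommGroup E] [NormedSpace ℝ E]

theorem eq_zero_of_isBounded_of_forall_add_smul_mem {s : Set E} (hs : Bornology.IsBounded s)
    {x d : E} (hray : ∀ t : ℝ, 0 ≤ t → x + t • d ∈ s) : d = 0 := by
  obtain ⟨r, hr⟩ := Metric.isBounded_iff.1 hs
  by_contra hd
  obtain ⟨k, hk⟩ := exists_lt_nsmul (norm_pos_iff.2 hd) r
  have hdist := hr (hray k k.cast_nonneg) (hray 0 le_rfl)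
  simp only [zero_smul, add_zero, dist_self_add_left, norm_smul, RCLike.norm_natCast] at hdist
  exact hdist.not_gt (by simpa using hk)

theorem interior_nonempty_of_convex_of_span_eq_top [FiniteDimensional ℝ E] {s : Set E}
    (hs : Convex ℝ s) (h0 : 0 ∈ s) (hspan : Submodule.span ℝ s = ⊤) : (interior s).Nonempty := by
  rw [hs.interior_nonempty_iff_affineSpan_eq_top, ← Set.insert_eq_of_mem h0]
  exact SetLike.coe_injective (by rw [affineSpan_insert_zero, hspan]; rfl)

/-- Were `C` contained in a hyperplane, a nonzero functional would vanish on it; so `C` has interior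
points, and any point outside `C` can be separated from it. -/
theorem pointedCone_eq_top_of_forall_dual_eq_zero [FiniteDimensional ℝ E] (C : PointedCone ℝ E)
    (hC : ∀ f : Module.Dual ℝ E, (∀ x ∈ C, 0 ≤ f x) → f = 0) : C = ⊤ := by
  have hspan : Submodule.span ℝ (C : Set E) = ⊤ := by
    by_contra hne
    obtain ⟨f, hf, hker⟩ := Submodule.exists_le_ker_of_lt_top _ (lt_top_iff_ne_top.2 hne)
    exact hf (hC f fun x hx => (hker (Submodule.subset_span hx)).ge)
  by_contra hne
  obtain ⟨y, hy⟩ : ∃ y, y ∉ C := by simpa [SetLike.ext_iff] using hne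
  obtain ⟨f, hf, hmax⟩ := geometric_hahn_banach_of_nonempty_interior_point C.convex
    (fun h => hy (interior_subset h))
    (interior_nonempty_of_convex_of_span_eq_top C.convex C.zero_mem hspan)
  have hnonpos : ∀ x ∈ C, f x ≤ 0 := fun x hx => by
    by_contra! hpos
    obtain ⟨k, hk⟩ := exists_lt_nsmul hpos (f y)
    exact (hmax _ (nsmul_mem hx k)).not_gt (by rwa [map_nsmul])
  refine hf (neg_eq_zero.1 (ContinuousLinearMap.coe_injective (hC (-f).toLinearMap fun x hx => ?_)))
  simpa using hnonpos x hx

end ConvexGeometry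

section Trace

variable {m : Type*} [Fintype m]

theorem trace_vecMulVec_mul {R : Type*} [CommSemiring R] (v w : m → R) (S : Matrix m m R) :
    (vecMulVec v w * S).trace = w ⬝ᵥ S *ᵥ v := by
  rw [vecMulVec_mul, trace_vecMulVec, dotProduct_comm, dotProduct_mulVec]

theorem posSemidef_of_forall_trace_mul_nonneg {R : Type*} [CommRing R] [PartialOrder R]
    [StarRing R] [StarOrderedRing R] {S : Matrix m m R} (hS : S.IsHermitian)
    (h : ∀ P : Matrix m m R, P.PosSemidef → 0 ≤ (P * S).trace) : S.PosSemidef :=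
  .of_dotProduct_mulVec_nonneg hS fun x => by
    simpa only [trace_vecMulVec_mul] using h _ (posSemidef_vecMulVec_self_star x)

open scoped MatrixOrder in
/-- The vectors `(tr (P * B i))ᵢ` with `P` positive semidefinite form a convex cone, and a linear
functional `d` is nonnegative on it precisely when `∑ i, d i • B i` is positive semidefinite. -/
theorem exists_posSemidef_forall_trace_mul_eq {ι : Type*} [Fintype ι] {B : ι → Matrix m m ℝ}
    (hB : ∀ i, (B i).IsHermitian) (h : ∀ d : ι → ℝ, (∑ i, d i • B i).PosSemidef → d = 0)
    (c : ι → ℝ) : ∃ P : Matrix m m ℝ, P.PosSemidef ∧ ∀ i, (P * B i).trace = c i := by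
  classical
  let traces : Matrix m m ℝ →ₗ[ℝ] ι → ℝ :=
    LinearMap.pi fun i => traceLinearMap m ℝ ℝ ∘ₗ LinearMap.mulRight ℝ (B i)
  have htop : (PointedCone.positive ℝ (Matrix m m ℝ)).map traces = ⊤ := by
    refine pointedCone_eq_top_of_forall_dual_eq_zero _ fun f hf => ?_
    obtain ⟨d, rfl⟩ := (dotProductEquiv ℝ ι).surjective f
    have hd_traces (P : Matrix m m ℝ) : d ⬝ᵥ traces P = (P * ∑ i, d i • B i).trace := by
      simp [traces, dotProduct, Finset.mul_sum, trace_sum]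
    have hherm : (∑ i, d i • B i).IsHermitian :=
      isSelfAdjoint_sum _ fun i _ => (hB i).smul (.all (d i))
    have hd : d = 0 := h d <| posSemidef_of_forall_trace_mul_nonneg hherm fun P hP =>
      hd_traces P ▸ hf _ (PointedCone.mem_map.2 ⟨P, hP.nonneg, rfl⟩)
    rw [hd, map_zero]
  obtain ⟨P, hP, hPc⟩ := PointedCone.mem_map.1 (htop ▸ Submodule.mem_top : c ∈ _)
  exact ⟨P, nonneg_iff_posSemidef.1 hP, congrFun hPc⟩

end Trace

section Pencil

variable {n m : ℕ} (A : Fin (n + 1) → Matrix (Fin m) (Fin m) ℝ)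

theorem pencilEval_add_smul (x d : Fin n → ℝ) (t : ℝ) :
    pencilEval A (x + t • d) = pencilEval A x + t • ∑ i, d i • A i.succ := by
  simp [pencilEval, add_smul, mul_smul, Finset.sum_add_distrib, Finset.smul_sum, add_assoc]

theorem pencilPoly_eq_add_sum_smul : pencilPoly A =
    (A 0).map C + ∑ i : Fin n, (X i : MvPolynomial (Fin n) ℝ) • (A i.succ).map C := by
  ext1 a b
  simp [pencilPoly, Matrix.sum_apply]

theorem pencilPoly_map_eval (x : Fin n → ℝ) : (pencilPoly A).map (eval x) = pencilEval A x := by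
  ext a b
  simp [pencilPoly, pencilEval, Matrix.sum_apply]

theorem vLv_eq_dotProduct (v : Fin m → MvPolynomial (Fin n) ℝ) :
    vLv A v = v ⬝ᵥ pencilPoly A *ᵥ v := by
  simp only [vLv, dotProduct, mulVec, Finset.mul_sum, mul_assoc]

theorem vLv_smul (p : MvPolynomial (Fin n) ℝ) (v : Fin m → MvPolynomial (Fin n) ℝ) :
    vLv A (p • v) = p ^ 2 * vLv A v := by
  simp only [vLv_eq_dotProduct, mulVec_smul, dotProduct_smul, smul_dotProduct, smul_eq_mul]
  ring

/-- The quadratic module `M_L` of a linear pencil as an additive submonoid. -/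
def pencilQuadraticModule : AddSubmonoid (MvPolynomial (Fin n) ℝ) where
  carrier := {p | memQM A p}
  zero_mem' := ⟨0, 0, Fin.elim0, Fin.elim0, by simp⟩
  add_mem' := by
    rintro _ _ ⟨k, r, q, v, rfl⟩ ⟨k', r', q', v', rfl⟩
    refine ⟨k + k', r + r', Fin.append q q', Fin.append v v', ?_⟩
    simp only [Fin.sum_univ_add, Fin.append_left, Fin.append_right]
    ring

theorem vLv_mem_pencilQuadraticModule (v : Fin m → MvPolynomial (Fin n) ℝ) :
    vLv A v ∈ pencilQuadraticModule A :=
  ⟨0, 1, Fin.elim0, fun _ => v, by simp⟩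

theorem isQuadraticModule_pencilQuadraticModule : IsQuadraticModule (pencilQuadraticModule A) where
  one_mem := ⟨1, 0, fun _ => 1, Fin.elim0, by simp⟩
  sq_mul_mem p := by
    rintro _ ⟨k, r, q, v, rfl⟩
    refine ⟨k, r, fun i => p * q i, fun j => p • v j, ?_⟩
    simp only [vLv_smul, mul_pow, mul_add, Finset.mul_sum]

theorem archimedeanQM_iff_boundedSubalgebra_eq_top :
    archimedeanQM A ↔ (isQuadraticModule_pencilQuadraticModule A).boundedSubalgebra = ⊤ := by
  rw [Algebra.eq_top_iff]
  rfl

variable {A}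

theorem eq_zero_of_isBounded_specSet_of_posSemidef (hne : (specSet A).Nonempty)
    (hb : Bornology.IsBounded (specSet A)) {d : Fin n → ℝ}
    (hd : (∑ i, d i • A i.succ).PosSemidef) : d = 0 := by
  obtain ⟨x, hx⟩ := hne
  refine eq_zero_of_isBounded_of_forall_add_smul_mem hb (x := x) fun t ht => ?_
  rw [specSet, Set.mem_ofPred_eq, pencilEval_add_smul]
  exact PosSemidef.add hx (hd.smul ht)

theorem eval_nonneg_of_memQM {p : MvPolynomial (Fin n) ℝ} (hp : memQM A p) {x : Fin n → ℝ}
    (hx : x ∈ specSet A) : 0 ≤ eval x p := by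
  obtain ⟨k, r, q, v, rfl⟩ := hp
  have hvLv (j : Fin r) : 0 ≤ eval x (vLv A (v j)) := by
    have hmulVec : eval x ∘ (pencilPoly A *ᵥ v j) = pencilEval A x *ᵥ (eval x ∘ v j) := by
      ext a
      rw [Function.comp_apply, RingHom.map_mulVec, pencilPoly_map_eval]
    rw [vLv_eq_dotProduct, RingHom.map_dotProduct, hmulVec]
    exact hx.dotProduct_mulVec_nonneg (eval x ∘ v j)
  simp only [map_add, map_sum, map_pow]
  exact add_nonneg (Finset.sum_nonneg fun i _ => sq_nonneg _) (Finset.sum_nonneg fun j _ => hvLv j)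

theorem isBounded_specSet_of_archimedeanQM (h : archimedeanQM A) :
    Bornology.IsBounded (specSet A) := by
  choose N hN using fun i => h (X i)
  refine (Bornology.IsBounded.pi fun i => Metric.isBounded_Icc (-√(N i)) √(N i)).subset
    fun x hx i _ => ?_
  have hsq : x i ^ 2 ≤ N i := by simpa using eval_nonneg_of_memQM (hN i) hx
  exact abs_le.1 (Real.abs_le_sqrt hsq)

theorem trace_map_C_mul_pencilPoly (P : Matrix (Fin m) (Fin m) ℝ) :
    (P.map C * pencilPoly A).trace =
      C (P * A 0).trace + ∑ i : Fin n, X i * C (P * A i.succ).trace := by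
  simp only [pencilPoly_eq_add_sum_smul, mul_add, Finset.mul_sum, mul_smul_comm, trace_add,
    trace_sum, trace_smul, smul_eq_mul, ← Matrix.map_mul, AddMonoidHom.map_trace]

theorem trace_map_C_mul_pencilPoly_mem {P : Matrix (Fin m) (Fin m) ℝ} (hP : P.PosSemidef) :
    (P.map C * pencilPoly A).trace ∈ pencilQuadraticModule A := by
  obtain ⟨r, v, rfl⟩ := posSemidef_iff_eq_sum_vecMulVec.1 hP
  have hmap : (∑ j, vecMulVec (v j) (star (v j))).map (C : ℝ →+* MvPolynomial (Fin n) ℝ) =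
      ∑ j, vecMulVec (C ∘ v j) (C ∘ v j) := by
    ext1 a b
    simp [Matrix.sum_apply, vecMulVec_apply]
  simp only [hmap, Finset.sum_mul, trace_sum, trace_vecMulVec_mul, ← vLv_eq_dotProduct]
  exact sum_mem fun j _ => vLv_mem_pencilQuadraticModule A _

theorem exists_C_add_linear_mem_pencilQuadraticModule
    (hsymm : ∀ i : Fin n, (A i.succ).IsSymm) (hne : (specSet A).Nonempty)
    (hb : Bornology.IsBounded (specSet A)) (c : Fin n → ℝ) :
    ∃ a : ℝ, C a + ∑ i, X i * C (c i) ∈ pencilQuadraticModule A := by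
  obtain ⟨P, hP, hPc⟩ := exists_posSemidef_forall_trace_mul_eq
    (fun i => isHermitian_iff_isSymm.2 (hsymm i))
    (fun _ hd => eq_zero_of_isBounded_specSet_of_posSemidef hne hb hd) c
  refine ⟨(P * A 0).trace, ?_⟩
  simpa only [trace_map_C_mul_pencilPoly, hPc] using trace_map_C_mul_pencilPoly_mem (A := A) hP

theorem X_mem_boundedSubalgebra_of_isBounded_specSet (hsymm : ∀ i : Fin n, (A i.succ).IsSymm)
    (hne : (specSet A).Nonempty) (hbdd : Bornology.IsBounded (specSet A)) (i : Fin n) :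
    X i ∈ (isQuadraticModule_pencilQuadraticModule A).boundedSubalgebra := by
  have hmem := exists_C_add_linear_mem_pencilQuadraticModule hsymm hne hbdd
  obtain ⟨a, ha⟩ := hmem (Pi.single i 1)
  obtain ⟨b, hb⟩ := hmem (-Pi.single i 1)
  refine IsQuadraticModule.mem_boundedSubalgebra_of_add_mem_of_sub_mem _ (a := a) (b := b) ?_ ?_
  · simpa [Pi.single_apply, apply_ite C] using ha
  · simpa [Pi.single_apply, apply_ite C, sub_eq_add_neg] using hb

end Pencil

/-- **Lemma.** For a linear pencil `L` with nonempty spectrahedron `S_L`, the spectrahedron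
`S_L` is bounded if and only if the quadratic module `M_L` is archimedean. -/
theorem spectrahedron_bounded_iff_archimedean_of_nonempty
    (n m : ℕ) (A : Fin (n+1) → Matrix (Fin m) (Fin m) ℝ)
    (hsymm : ∀ i, (A i).IsSymm)
    (hne : (specSet A).Nonempty) :
    Bornology.IsBounded (specSet A) ↔ archimedeanQM A := by
  refine ⟨fun hb => ?_, isBounded_specSet_of_archimedeanQM⟩
  rw [archimedeanQM_iff_boundedSubalgebra_eq_top, ← top_le_iff, ← adjoin_range_X]
  exact Algebra.adjoin_le <| Set.range_subset_iff.2 <|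
    X_mem_boundedSubalgebra_of_isBounded_specSet (fun i => hsymm i.succ) hne hb
end

section
/- Let L be a linear pencil of size m which is either weakly infeasible or weakly feasible. Then there exist k ≥ 1 and nonzero vectors u₁,…,u_k ∈ ℝᵐ such that Σᵢ₌₁ᵏ uᵢᵀ L uᵢ = 0 (as a polynomial identity in ℝ[X₁,…,Xₙ]). -/
/-!
Consider the trace pairing `tr (A Z)` with density matrices `Z`, a compact convex set. Separating
the origin from its image under `Z ↦ (tr (A 0 * Z), …, tr (A n * Z))` yields the alternative: either
some density matrix `Z` is orthogonal to all coefficients of the pencil, or some real combination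
`D = y 0 • A 0 + ⋯ + y n • A n` is positive definite. In the second case, unless `L` is strongly
infeasible, some `L x` is arbitrarily close to a positive semidefinite matrix; as positive
definiteness is an open condition, `D + s • L x` is then positive definite, and for `s > |y 0|`
it is a positive multiple of a value of `L`. Hence a pencil that is weakly infeasible or weakly
feasible falls under the first case, and writing `Z = ∑ uᵢ uᵢᵀ` turns orthogonality into
`∑ uᵢᵀ L uᵢ = 0`.
-/

open MvPolynomial Matrix

/-- The Frobenius distance between two real matrices. (All norms on the finite-dimensional
space of symmetric matrices are equivalent, so positivity of the distance between two sets
does not depend on the choice of norm.) -/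
noncomputable def frobDist {m : ℕ} (M N : Matrix (Fin m) (Fin m) ℝ) : ℝ :=
  Real.sqrt (∑ a, ∑ b, (M a b - N a b)^2)

/-- A linear pencil `L` is strongly infeasible if the distance between the affine set
`{L(x) ∣ x ∈ ℝⁿ}` and the cone of positive semidefinite matrices is strictly positive. -/
def stronglyInfeasible {n m : ℕ} (A : Fin (n+1) → Matrix (Fin m) (Fin m) ℝ) : Prop :=
  ∃ ε > (0:ℝ), ∀ (x : Fin n → ℝ) (B : Matrix (Fin m) (Fin m) ℝ), B.PosSemidef →
    ε ≤ frobDist (pencilEval A x) B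

/-- A linear pencil is weakly infeasible if it is infeasible but not strongly infeasible. -/
def weaklyInfeasible {n m : ℕ} (A : Fin (n+1) → Matrix (Fin m) (Fin m) ℝ) : Prop :=
  specSet A = ∅ ∧ ¬ stronglyInfeasible A

/-- A linear pencil is weakly feasible if `S_L ≠ ∅` but there is no `x` with `L(x) ≻ 0`. -/
def weaklyFeasible {n m : ℕ} (A : Fin (n+1) → Matrix (Fin m) (Fin m) ℝ) : Prop :=
  (specSet A).Nonempty ∧ ¬ ∃ x : Fin n → ℝ, (pencilEval A x).PosDef

/-- `uᵀ L u` as a polynomial, for a constant vector `u ∈ ℝᵐ`. -/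
noncomputable def uLu {n m : ℕ} (A : Fin (n+1) → Matrix (Fin m) (Fin m) ℝ)
    (u : Fin m → ℝ) : MvPolynomial (Fin n) ℝ :=
  ∑ a : Fin m, ∑ b : Fin m,
    MvPolynomial.C (u a) * pencilPoly A a b * MvPolynomial.C (u b)

open scoped Topology ComplexOrder

theorem exists_forall_apply_eq_zero_or_exists_forall_sum_mul_apply_pos {E ι : Type*} [Fintype ι]
    [AddCommGroup E] [Module ℝ E] [TopologicalSpace E] {K : Set E} (hconv : Convex ℝ K)
    (hcomp : IsCompact K) (f : ι → E →L[ℝ] ℝ) :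
    (∃ z ∈ K, ∀ j, f j z = 0) ∨ ∃ y : ι → ℝ, ∀ z ∈ K, 0 < ∑ j, y j * f j z := by
  classical
  let F : E →L[ℝ] ι → ℝ := ContinuousLinearMap.pi f
  by_cases hzero : (0 : ι → ℝ) ∈ F '' K
  · obtain ⟨z, hz, hFz⟩ := hzero
    exact .inl ⟨z, hz, congrFun hFz⟩
  · obtain ⟨g, δ, hδ, hg⟩ := geometric_hahn_banach_point_closed
      (hconv.linear_image F.toLinearMap) (hcomp.image F.continuous).isClosed hzero
    rw [map_zero] at hδ
    refine .inr ⟨fun j => g (Pi.single j 1), fun z hz => ?_⟩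
    calc 0 < g (F z) := hδ.trans (hg _ ⟨z, hz, rfl⟩)
      _ = ∑ j, g (Pi.single j 1) * f j z := by
        conv_lhs => rw [pi_eq_sum_univ' (F z)]
        simp [F, Pi.single, mul_comm]

theorem exists_fin_ne_zero_sum_eq {ι α M : Type*} [Fintype ι] [Zero α] [AddCommMonoid M]
    (v : ι → α) (f : α → M) (hf : f 0 = 0) :
    ∃ (k : ℕ) (u : Fin k → α), (∀ i, u i ≠ 0) ∧ ∑ i, f (u i) = ∑ i, f (v i) := by
  classical
  let e := Fintype.equivFin {i // v i ≠ 0}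
  refine ⟨_, fun i => v (e.symm i), fun i => (e.symm i).2, ?_⟩
  calc ∑ i, f (v (e.symm i)) = ∑ i : {i // v i ≠ 0}, f (v i) :=
        e.symm.sum_comp fun i : {i // v i ≠ 0} => f (v i)
    _ = ∑ i with v i ≠ 0, f (v i) := (Finset.sum_subtype _ (by simp) fun i => f (v i)).symm
    _ = ∑ i, f (v i) := Finset.sum_filter_of_ne fun i _ hi hvi => hi (by rw [hvi, hf])

section Matrices

variable {n 𝕜 : Type*} [RCLike 𝕜]

open scoped MatrixOrder Matrix.Norms.L2Operator in
theorem exists_eq_conjTranspose_mul_self_of_posSemidef [Fintype n] {Z : Matrix n n 𝕜}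
    (hZ : Z.PosSemidef) : ∃ B : Matrix n n 𝕜, Z = Bᴴ * B := by
  classical
  exact CStarAlgebra.nonneg_iff_eq_star_mul_self.mp hZ.nonneg

theorem exists_eq_sum_vecMulVec_star_of_posSemidef [Finite n] {Z : Matrix n n 𝕜}
    (hZ : Z.PosSemidef) :
    ∃ (k : ℕ) (u : Fin k → n → 𝕜), (∀ i, u i ≠ 0) ∧ Z = ∑ i, vecMulVec (u i) (star (u i)) := by
  have := Fintype.ofFinite n
  obtain ⟨B, rfl⟩ := exists_eq_conjTranspose_mul_self_of_posSemidef hZ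
  obtain ⟨k, u, hu, hsum⟩ := exists_fin_ne_zero_sum_eq (fun i => star (B i))
    (fun v => vecMulVec v (star v)) (zero_vecMulVec _)
  refine ⟨k, u, hu, ?_⟩
  rw [hsum]
  ext a b
  simp [mul_apply, Matrix.sum_apply, vecMulVec_apply]

theorem im_trace_mul_eq_zero [Fintype n] {A B : Matrix n n 𝕜} (hA : A.IsHermitian)
    (hB : B.IsHermitian) : RCLike.im (A * B).trace = 0 := by
  rw [← RCLike.conj_eq_iff_im, ← RCLike.star_def, ← trace_conjTranspose, conjTranspose_mul,
    hA.eq, hB.eq, trace_mul_comm]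

theorem trace_mul_vecMulVec_star {R : Type*} [Fintype n] [CommSemiring R] [Star R]
    (M : Matrix n n R) (u : n → R) :
    (M * vecMulVec u (star u)).trace = star u ⬝ᵥ M *ᵥ u := by
  rw [mul_vecMulVec, trace_vecMulVec, dotProduct_comm]

variable (n 𝕜) in
/-- The density matrices: positive semidefinite matrices of trace one. They form a compact base
of the cone of positive semidefinite matrices. -/
def densityMatrices [Fintype n] : Set (Matrix n n 𝕜) :=
  {Z | Z.PosSemidef ∧ Z.trace = 1}

section

variable [Fintype n]

theorem convex_densityMatrices : Convex ℝ (densityMatrices n 𝕜) := by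
  rintro Z ⟨hZ, hZtr⟩ W ⟨hW, hWtr⟩ a b ha hb hab
  refine ⟨(hZ.smul ha).add (hW.smul hb), ?_⟩
  rw [trace_add, trace_smul, trace_smul, hZtr, hWtr, ← add_smul, hab, one_smul]

open scoped Matrix.Norms.Frobenius in
theorem trace_conjTranspose_mul_self_eq_norm_sq {m : Type*} [Fintype m] (B : Matrix m n 𝕜) :
    (Bᴴ * B).trace = ((‖B‖ ^ 2 : ℝ) : 𝕜) := by
  rw [frobenius_norm_def, ← Real.sqrt_eq_rpow, Real.sq_sqrt (by positivity), Finset.sum_comm]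
  simp [trace, mul_apply, RCLike.conj_mul]

open scoped Matrix.Norms.Frobenius in
theorem densityMatrices_eq_image_sphere :
    densityMatrices n 𝕜 = (fun B => Bᴴ * B) '' Metric.sphere (0 : Matrix n n 𝕜) 1 := by
  have htrace (B : Matrix n n 𝕜) : (Bᴴ * B).trace = 1 ↔ B ∈ Metric.sphere 0 1 := by
    rw [trace_conjTranspose_mul_self_eq_norm_sq, mem_sphere_zero_iff_norm, ← RCLike.ofReal_one,
      RCLike.ofReal_inj, pow_eq_one_iff_of_nonneg (norm_nonneg _) two_ne_zero]
  ext Z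
  constructor
  · rintro ⟨hZ, htr⟩
    obtain ⟨B, rfl⟩ := exists_eq_conjTranspose_mul_self_of_posSemidef hZ
    exact ⟨B, (htrace B).mp htr, rfl⟩
  · rintro ⟨B, hB, rfl⟩
    exact ⟨posSemidef_conjTranspose_mul_self B, (htrace B).mpr hB⟩

open scoped Matrix.Norms.Frobenius in
theorem isCompact_densityMatrices : IsCompact (densityMatrices n 𝕜) := by
  have := FiniteDimensional.proper 𝕜 (Matrix n n 𝕜)
  rw [densityMatrices_eq_image_sphere]
  exact (isCompact_sphere _ _).image (by fun_prop)

theorem posDef_of_forall_re_trace_mul_pos {M : Matrix n n 𝕜} (hM : M.IsHermitian)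
    (hpos : ∀ Z ∈ densityMatrices n 𝕜, 0 < RCLike.re (M * Z).trace) : M.PosDef := by
  refine .of_dotProduct_mulVec_pos hM fun v hv => ?_
  obtain ⟨t, ht, htv⟩ := RCLike.pos_iff_exists_ofReal.mp (dotProduct_star_self_pos_iff.mpr hv)
  have hmem : t⁻¹ • vecMulVec v (star v) ∈ densityMatrices n 𝕜 := by
    refine ⟨(posSemidef_vecMulVec_self_star v).smul (inv_nonneg.mpr ht.le), ?_⟩
    rw [trace_smul, trace_vecMulVec, dotProduct_comm, ← htv, RCLike.real_smul_ofReal,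
      ← RCLike.ofReal_mul, inv_mul_cancel₀ ht.ne', RCLike.ofReal_one]
  have hre := hpos _ hmem
  rw [mul_smul_comm, trace_smul, RCLike.smul_re, trace_mul_vecMulVec_star] at hre
  exact RCLike.pos_iff.mpr
    ⟨pos_of_mul_pos_right hre (inv_nonneg.mpr ht.le), hM.im_star_dotProduct_mulVec_self v⟩

theorem re_trace_mul_pos_of_posDef_of_posSemidef {M Z : Matrix n n 𝕜} (hM : M.PosDef)
    (hZ : Z.PosSemidef) (hne : Z ≠ 0) : 0 < RCLike.re (M * Z).trace := by
  obtain ⟨k, u, hu, rfl⟩ := exists_eq_sum_vecMulVec_star_of_posSemidef hZ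
  simp only [Matrix.mul_sum, trace_sum, trace_mul_vecMulVec_star, map_sum]
  exact Finset.sum_pos (fun i _ => hM.re_dotProduct_pos (hu i))
    (Finset.nonempty_of_sum_ne_zero hne)

theorem ne_zero_of_mem_densityMatrices {Z : Matrix n n 𝕜} (hZ : Z ∈ densityMatrices n 𝕜) :
    Z ≠ 0 := by
  rintro rfl
  simpa using hZ.2

/-- The real part of the trace pairing with `A`. On Hermitian matrices the pairing is real, so
taking the real part loses nothing. -/
noncomputable def reTraceMul (A : Matrix n n 𝕜) : Matrix n n 𝕜 →L[ℝ] ℝ :=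
  (RCLike.reLm ∘ₗ traceLinearMap n ℝ 𝕜 ∘ₗ LinearMap.mulLeft ℝ A).toContinuousLinearMap

@[simp]
theorem reTraceMul_apply (A Z : Matrix n n 𝕜) : reTraceMul A Z = RCLike.re (A * Z).trace := rfl

theorem exists_mem_densityMatrices_trace_mul_eq_zero_or_exists_posDef {ι : Type*} [Fintype ι]
    {A : ι → Matrix n n 𝕜} (hA : ∀ j, (A j).IsHermitian) :
    (∃ Z ∈ densityMatrices n 𝕜, ∀ j, (A j * Z).trace = 0) ∨
      ∃ y : ι → ℝ, (∑ j, y j • A j).PosDef := by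
  obtain ⟨Z, hZ, hZ0⟩ | ⟨y, hy⟩ :=
    exists_forall_apply_eq_zero_or_exists_forall_sum_mul_apply_pos
      (K := densityMatrices n 𝕜) convex_densityMatrices isCompact_densityMatrices
      fun j => reTraceMul (A j)
  · exact .inl ⟨Z, hZ, fun j =>
      RCLike.ext (by simpa using hZ0 j) (by simpa using im_trace_mul_eq_zero (hA j) hZ.1.1)⟩
  · refine .inr ⟨y, posDef_of_forall_re_trace_mul_pos ?_ fun Z hZ => ?_⟩
    · exact isSelfAdjoint_sum _ fun j _ => (hA j).smul (.all (y j))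
    · simpa [Matrix.sum_mul, trace_sum, RCLike.smul_re] using hy Z hZ

end

theorem eventually_nhds_posDef [Finite n] {M : Matrix n n 𝕜} (hM : M.PosDef) :
    ∀ᶠ N in 𝓝 M, N.IsHermitian → N.PosDef := by
  have := Fintype.ofFinite n
  have hcont : Continuous fun p : Matrix n n 𝕜 × Matrix n n 𝕜 =>
      RCLike.re (p.1 * p.2).trace := by fun_prop
  have hnear : ∀ᶠ N in 𝓝 M, ∀ Z ∈ densityMatrices n 𝕜, 0 < RCLike.re (N * Z).trace :=
    isCompact_densityMatrices.eventually_forall_of_forall_eventually fun Z hZ =>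
      hcont.continuousAt.eventually_const_lt
        (re_trace_mul_pos_of_posDef_of_posSemidef hM hZ.1 (ne_zero_of_mem_densityMatrices hZ))
  exact hnear.mono fun N hN hherm => posDef_of_forall_re_trace_mul_pos hherm hN

end Matrices

section Pencil

variable {n m : ℕ} (A : Fin (n + 1) → Matrix (Fin m) (Fin m) ℝ)

theorem pencilEval_eq_sum (x : Fin n → ℝ) :
    pencilEval A x = ∑ j, vecCons 1 x j • A j := by
  simp [pencilEval, Fin.sum_univ_succ]

theorem pencilPoly_apply_eq_sum (a b : Fin m) :
    pencilPoly A a b = ∑ j, vecCons 1 X j * C (A j a b) := by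
  simp [pencilPoly, Fin.sum_univ_succ]

theorem uLu_eq_sum (u : Fin m → ℝ) :
    uLu A u = ∑ j, vecCons 1 X j * C (star u ⬝ᵥ A j *ᵥ u) := by
  simp only [uLu, pencilPoly_apply_eq_sum, dotProduct, mulVec, star_trivial, map_sum,
    map_mul, Finset.mul_sum, Finset.sum_mul]
  rw [Finset.sum_comm_cycle]
  exact Finset.sum_congr rfl fun j _ => Finset.sum_congr rfl fun a _ =>
    Finset.sum_congr rfl fun b _ => by ring

theorem sum_uLu_eq_sum_mul_C_trace {ι : Type*} [Fintype ι] (u : ι → Fin m → ℝ) :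
    ∑ i, uLu A (u i) =
      ∑ j, vecCons 1 X j * C (A j * ∑ i, vecMulVec (u i) (star (u i))).trace := by
  simp only [uLu_eq_sum, trace_sum, trace_mul_vecMulVec_star, map_sum, Finset.mul_sum]
  exact Finset.sum_comm

variable {A}

theorem isHermitian_pencilEval (hsymm : ∀ i, (A i).IsSymm) (x : Fin n → ℝ) :
    (pencilEval A x).IsHermitian := by
  simp [Matrix.IsHermitian, pencilEval, conjTranspose_eq_transpose_of_trivial, transpose_sum,
    (hsymm _).eq]

theorem exists_posDef_pencilEval_of_pos {y : Fin (n + 1) → ℝ} (hy : 0 < y 0)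
    (hpos : (∑ j, y j • A j).PosDef) : ∃ x, (pencilEval A x).PosDef := by
  refine ⟨fun i => (y 0)⁻¹ * y i.succ, ?_⟩
  convert hpos.smul (inv_pos.mpr hy) using 1
  simp [pencilEval, Fin.sum_univ_succ, Finset.smul_sum, smul_smul, hy.ne']

open scoped Matrix.Norms.Frobenius in
theorem frobDist_eq_dist (M N : Matrix (Fin m) (Fin m) ℝ) : frobDist M N = dist M N := by
  simp [frobDist, dist_eq_norm, frobenius_norm_def, Real.sqrt_eq_rpow]

open scoped Matrix.Norms.Frobenius in
theorem not_stronglyInfeasible_of_mem_specSet {x : Fin n → ℝ} (hx : x ∈ specSet A) :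
    ¬ stronglyInfeasible A := by
  rintro ⟨ε, hε, hdist⟩
  have hle := hdist x _ hx
  rw [frobDist_eq_dist, dist_self] at hle
  exact hε.not_ge hle

theorem not_stronglyInfeasible_and_forall_not_posDef
    (h : weaklyInfeasible A ∨ weaklyFeasible A) :
    ¬ stronglyInfeasible A ∧ ¬ ∃ x, (pencilEval A x).PosDef := by
  obtain ⟨hempty, hstrong⟩ | ⟨⟨x, hx⟩, hpos⟩ := h
  · exact ⟨hstrong, fun ⟨x, hx⟩ => Set.eq_empty_iff_forall_notMem.mp hempty x hx.posSemidef⟩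
  · exact ⟨not_stronglyInfeasible_of_mem_specSet hx, hpos⟩

open scoped Matrix.Norms.Frobenius in
theorem exists_pencilEval_sub_mem_of_mem_nhds (h : ¬ stronglyInfeasible A)
    {U : Set (Matrix (Fin m) (Fin m) ℝ)} (hU : U ∈ 𝓝 0) :
    ∃ x B, B.PosSemidef ∧ pencilEval A x - B ∈ U := by
  obtain ⟨ε, hε, hball⟩ := Metric.mem_nhds_iff.mp hU
  simp only [stronglyInfeasible, frobDist_eq_dist] at h
  push Not at h
  obtain ⟨x, B, hB, hdist⟩ := h ε hε
  exact ⟨x, B, hB, hball (by rwa [mem_ball_zero_iff, ← dist_eq_norm])⟩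

theorem exists_posDef_pencilEval_of_not_stronglyInfeasible (hsymm : ∀ i, (A i).IsSymm)
    (hstrong : ¬ stronglyInfeasible A) {y : Fin (n + 1) → ℝ} (hy : (∑ j, y j • A j).PosDef) :
    ∃ x, (pencilEval A x).PosDef := by
  let D := ∑ j, y j • A j
  obtain ⟨s, hs, hys⟩ : ∃ s > 0, 0 < y 0 + s :=
    ⟨|y 0| + 1, by positivity, by linarith [neg_abs_le (y 0)]⟩
  have hnear : ∀ᶠ E in 𝓝 (0 : Matrix (Fin m) (Fin m) ℝ),
      (D + s • E).IsHermitian → (D + s • E).PosDef := by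
    have hcont : Continuous fun E => D + s • E := by fun_prop
    exact (hcont.tendsto' 0 D (by simp)).eventually (eventually_nhds_posDef hy)
  obtain ⟨x, B, hB, hE⟩ := exists_pencilEval_sub_mem_of_mem_nhds hstrong hnear
  have hherm : (D + s • (pencilEval A x - B)).IsHermitian :=
    hy.1.add (((isHermitian_pencilEval hsymm x).sub hB.1).smul (.all s))
  have hpos := (hE hherm).add_posSemidef (hB.smul hs.le)
  refine exists_posDef_pencilEval_of_pos (y := fun j => y j + s * vecCons 1 x j)
    (by simpa using hys) ?_
  convert hpos using 1
  simp only [D, pencilEval_eq_sum, Finset.smul_sum, smul_sub, add_smul, Finset.sum_add_distrib,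
    smul_smul]
  abel

end Pencil

/-- **Lemma.** If a linear pencil `L` of size `m` is weakly infeasible or weakly feasible,
then there exist `k ≥ 1` and nonzero vectors `u₁, …, u_k ∈ ℝᵐ` with `Σᵢ uᵢᵀ L uᵢ = 0`
as a polynomial identity. -/
theorem exists_nonzero_vectors_sum_uLu_eq_zero
    (n m : ℕ) (A : Fin (n+1) → Matrix (Fin m) (Fin m) ℝ)
    (hsymm : ∀ i, (A i).IsSymm)
    (h : weaklyInfeasible A ∨ weaklyFeasible A) :
    ∃ (k : ℕ), 1 ≤ k ∧ ∃ u : Fin k → Fin m → ℝ,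
      (∀ i, u i ≠ 0) ∧ ∑ i, uLu A (u i) = 0 := by
  obtain ⟨hstrong, hnot⟩ := not_stronglyInfeasible_and_forall_not_posDef h
  obtain ⟨Z, hZ, htrace⟩ :=
    (exists_mem_densityMatrices_trace_mul_eq_zero_or_exists_posDef
      fun j => (conjTranspose_eq_transpose_of_trivial _).trans (hsymm j)).resolve_right
        fun ⟨_, hy⟩ => hnot (exists_posDef_pencilEval_of_not_stronglyInfeasible hsymm hstrong hy)
  obtain ⟨k, u, hu, rfl⟩ := exists_eq_sum_vecMulVec_star_of_posSemidef hZ.1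
  refine ⟨k, ?_, u, hu, ?_⟩
  · exact Fin.pos_iff_nonempty.mpr <| Finset.univ_nonempty_iff.mp <|
      Finset.nonempty_of_sum_ne_zero (ne_zero_of_mem_densityMatrices hZ)
  · simp only [sum_uLu_eq_sum_mul_C_trace, htrace, map_zero, mul_zero, Finset.sum_const_zero]
end
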